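/- Let E be a real inner product space and ε ≠ 0 a real number. Then for all x, y ∈ E one has ⟪ x/√(‖x‖² + ε²) − y/√(‖y‖² + ε²), x − y ⟫ ≥ 0; that is, the map x ↦ x/√(‖x‖² + ε²) is monotone. -/

import Mathlib

/-!
Put `A = √(‖x‖² + ε²)` and `B = √(‖y‖² + ε²)`. Since `‖x‖² = A² - ε²` and `‖y‖² = B² - ε²`, the
inner product equals `(A + B) / (A * B) * (A * B - ε² - ⟪x, y⟫)`. The last factor is nonnegative
by Cauchy–Schwarz applied twice: `⟪x, y⟫ + ε² ≤ ‖x‖ * ‖y‖ + ε² ≤ A * B`.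
-/

open scoped InnerProductSpace

/-- Monotonicity of the kernel of the regularized friction operator: for
`ε ≠ 0`, the map `x ↦ x / √(‖x‖² + ε²)` is monotone, i.e.
`⟪x/√(‖x‖² + ε²) − y/√(‖y‖² + ε²), x − y⟫ ≥ 0`. -/
theorem regularized_friction_kernel_monotone
    {E : Type*} [NormedAddCommGroup E] [InnerProductSpace ℝ E]
    (ε : ℝ) (hε : ε ≠ 0) (x y : E) :
    0 ≤ ⟪(Real.sqrt (‖x‖ ^ 2 + ε ^ 2))⁻¹ • x - (Real.sqrt (‖y‖ ^ 2 + ε ^ 2))⁻¹ • y,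
          x - y⟫_ℝ := by
  set A := Real.sqrt (‖x‖ ^ 2 + ε ^ 2) with hA
  set B := Real.sqrt (‖y‖ ^ 2 + ε ^ 2) with hB
  have hε2 : 0 < ε ^ 2 := by positivity
  have hA0 : 0 < A := Real.sqrt_pos.2 (by positivity)
  have hB0 : 0 < B := Real.sqrt_pos.2 (by positivity)
  have hA2 : A ^ 2 = ‖x‖ ^ 2 + ε ^ 2 := Real.sq_sqrt (by positivity)
  have hB2 : B ^ 2 = ‖y‖ ^ 2 + ε ^ 2 := Real.sq_sqrt (by positivity)
  have hxy : ⟪x, y⟫_ℝ ≤ ‖x‖ * ‖y‖ := real_inner_le_norm x y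
  -- Cauchy–Schwarz in the plane for `(‖x‖, ε)` and `(‖y‖, ε)`, whose lengths are `A` and `B`.
  have hAB : ‖x‖ * ‖y‖ + ε ^ 2 ≤ A * B := by
    refine (sq_le_sq₀ (by positivity) (by positivity)).1 ?_
    rw [mul_pow, hA2, hB2]
    nlinarith [mul_nonneg hε2.le (sq_nonneg (‖x‖ - ‖y‖))]
  have key : ⟪A⁻¹ • x - B⁻¹ • y, x - y⟫_ℝ
      = (A + B) / (A * B) * (A * B - ε ^ 2 - ⟪x, y⟫_ℝ) := by
    simp only [inner_sub_left, inner_sub_right, real_inner_smul_left,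
      real_inner_self_eq_norm_sq, real_inner_comm x y]
    rw [eq_sub_of_add_eq hA2.symm, eq_sub_of_add_eq hB2.symm]
    field_simp
    ring
  rw [key]
  exact mul_nonneg (by positivity) (by linarith)
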